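/- Let k ∈ {0,1} and T > 0. Suppose the coefficients g^{jl} : ℤ^d × [0,T] → ℝ (j,l = 1,…,d) satisfy g^{jl} ∈ L^∞([0,T]; ℓ^∞(ℤ^d)) ∩ C⁰([0,T]; ℓ^∞(ℤ^d)), the data satisfy f, g ∈ ℓ^{2,k}(ℤ^d), and F ∈ L¹([0,T]; ℓ^{2,k}(ℤ^d)) ∩ C⁰([0,T]; ℓ^{2,k}(ℤ^d)). Then there exists a unique u ∈ C²([0,T]; ℓ^{2,k}(ℤ^d)) such that ∂_t² u(x,t) − Σ_{j,l=1}^d g^{jl}(x,t)·(∂_j∂_l u)(x,t) = F(x,t) for all (x,t) ∈ ℤ^d × [0,T], u(·,0) = f, and ∂_t u(·,0) = g. -/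

import Mathlib

/-!
On `ℓ^{2,k}(ℤ^d)` with `k ∈ {0,1}` the operators `∂ⱼ` are bounded, so the wave equation is a linear
second-order ODE `u'' = A(t) u + F(t)` in a Banach space, with `A(t) = ∑ g^{jl}(t) ∂ⱼ∂ₗ` continuous
in operator norm. Well-posedness then follows from the linear Cauchy–Lipschitz theory.

Boundedness of `∂ⱼ` (`exists_pd_clm`). Multiplication by `⟨m⟩^k` turns `ℓ^{2,k}` into `ℓ²` and `∂ⱼ`
into the operator with kernel `⟨x⟩^k φⱼ(a eⱼ) ⟨x - a eⱼ⟩^{-k}`. As `|φⱼ(a eⱼ)| ≤ 2/(1+a²)` and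
`⟨x⟩² ≤ 2⟨x - a eⱼ⟩² + 2a²`, the square of the kernel is at most
`8 (1/(1+a²) + 1/(1+(xⱼ-a)²)) · 1/(1+a²)` (`kernel_sq_le`). The first factor is summable in `a`
uniformly in `x`, and the second depends on `a` alone and is summable, so Cauchy–Schwarz in `a`
followed by summation over `x` gives the `ℓ²` bound (`schur_bound`). For `k = 1` the kernel is not
dominated by a summable convolution kernel, which is why the weight `1/(1+(xⱼ-a)²)` is kept.

The ODE (`exists_linear_second_order`, `unique_linear_second_order`). For the first-order system in
`(u, u')`, the `n`-th iterate of the Picard map on `C([0,T])` is Lipschitz with constant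
`(LT)ⁿ/n!`, hence a contraction for large `n`; this gives existence on the whole of `[0,T]`.
Uniqueness is Grönwall's inequality.
-/

open scoped BigOperators ENNReal NNReal
open MeasureTheory Filter

noncomputable section

/-- Kernel `φⱼ` of the discrete partial derivative on `ℤ^d`:
`φⱼ(m) = -4i/(π(4a²-1))` if `m = a·eⱼ`, and `0` otherwise. -/
def phi (d : ℕ) (j : Fin d) (m : Fin d → ℤ) : ℂ :=
  if ∀ i, i ≠ j → m i = 0 then
    (-4 * Complex.I) / ((Real.pi : ℂ) * (4 * (m j : ℂ) ^ 2 - 1))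
  else 0

/-- Discrete convolution on `ℤ^d`. -/
def dconv {d : ℕ} (u v : (Fin d → ℤ) → ℂ) (k : Fin d → ℤ) : ℂ :=
  ∑' m, u m * v (k - m)

/-- Discrete partial derivative `∂ⱼ u = u ∗ φⱼ`. -/
def pd {d : ℕ} (j : Fin d) (u : (Fin d → ℤ) → ℂ) : (Fin d → ℤ) → ℂ :=
  dconv u (phi d j)

/-- Japanese bracket `⟨m⟩ = (1+|m|²)^{1/2}`. -/
def jap {d : ℕ} (m : Fin d → ℤ) : ℝ :=
  Real.sqrt (1 + ∑ i, ((m i : ℝ)) ^ 2)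

open scoped Classical in
/-- `ℓ^p` norm on `ℤ^d` (valued in `ℝ≥0∞`), `1 ≤ p ≤ ∞`. -/
def lpn {d : ℕ} (p : ℝ≥0∞) (f : (Fin d → ℤ) → ℂ) : ℝ≥0∞ :=
  if p = ⊤ then ⨆ m, (‖f m‖₊ : ℝ≥0∞)
  else (∑' m, (‖f m‖₊ : ℝ≥0∞) ^ p.toReal) ^ (1 / p.toReal)

/-- Weighted `ℓ^{2,k}` norm: the `ℓ²` norm of `m ↦ ⟨m⟩^k f(m)`. -/
def w2 {d : ℕ} (k : ℕ) (f : (Fin d → ℤ) → ℂ) : ℝ≥0∞ :=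
  lpn 2 (fun m => ((jap m ^ k : ℝ) : ℂ) * f m)

/-- Discrete Laplacian on `ℤ^d`. -/
def lap {d : ℕ} (u : (Fin d → ℤ) → ℂ) (x : Fin d → ℤ) : ℂ :=
  ∑ j, (u (x + Pi.single j 1) + u (x - Pi.single j 1) - 2 * u x)

/-- Continuity of a curve `t ↦ f(·,t)` into `ℓ^{2,k}(ℤ^d)` on a set `S` of times. -/
def ContW {d : ℕ} (k : ℕ) (S : Set ℝ) (f : ℝ → (Fin d → ℤ) → ℂ) : Prop :=
  ∀ t ∈ S, Tendsto (fun s => w2 k (fun m => f s m - f t m))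
    (nhdsWithin t S) (nhds (0 : ℝ≥0∞))

/-- `f'` is the derivative (in the `ℓ^{2,k}(ℤ^d)` norm) of the curve `t ↦ f(·,t)` on `S`. -/
def DerivW {d : ℕ} (k : ℕ) (S : Set ℝ) (f f' : ℝ → (Fin d → ℤ) → ℂ) : Prop :=
  ∀ t ∈ S, Tendsto
    (fun s => w2 k (fun m => (s - t)⁻¹ • (f s m - f t m) - f' t m))
    (nhdsWithin t (S \ {t})) (nhds (0 : ℝ≥0∞))

/-- `u ∈ C²(S; ℓ^{2,k}(ℤ^d))`, with first and second time derivatives `u1`, `u2`. -/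
structure IsC2 {d : ℕ} (k : ℕ) (S : Set ℝ) (u u1 u2 : ℝ → (Fin d → ℤ) → ℂ) : Prop where
  mem0 : ∀ t ∈ S, w2 k (u t) < ⊤
  mem1 : ∀ t ∈ S, w2 k (u1 t) < ⊤
  mem2 : ∀ t ∈ S, w2 k (u2 t) < ⊤
  cont0 : ContW k S u
  cont1 : ContW k S u1
  cont2 : ContW k S u2
  hder1 : DerivW k S u u1
  hder2 : DerivW k S u1 u2

/-- `ℓ^∞` norm of a real-valued function on `ℤ^d` (valued in `ℝ≥0∞`). -/
def linf {d : ℕ} (f : (Fin d → ℤ) → ℝ) : ℝ≥0∞ := ⨆ m, (‖f m‖₊ : ℝ≥0∞)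

/-! ### Linear ODEs in Banach spaces -/

section ODE

open scoped Nat

variable {G : Type*} [NormedAddCommGroup G] [NormedSpace ℝ G]

/-- The integrand of the Picard map for `y' = B(t) y + c(t)`; curves on `[0,T]` are extended to `ℝ`
by constants. -/
def picardRhs {T : ℝ} (hT : 0 ≤ T) (B : ℝ → G →L[ℝ] G) (c : ℝ → G) (y : C(Set.Icc 0 T, G))
    (s : ℝ) : G :=
  B s (Set.IccExtend hT y s) + c s

lemma continuous_picardRhs {T : ℝ} (hT : 0 ≤ T) {B : ℝ → G →L[ℝ] G} {c : ℝ → G}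
    (hB : Continuous B) (hc : Continuous c) (y : C(Set.Icc 0 T, G)) :
    Continuous (picardRhs hT B c y) :=
  (hB.clm_apply y.continuous.Icc_extend').add hc

/-- The Picard map `y ↦ y₀ + ∫₀ᵗ (B(s) y(s) + c(s)) ds` on `C([0,T]; G)`. -/
def picardMap {T : ℝ} (hT : 0 ≤ T) {B : ℝ → G →L[ℝ] G} {c : ℝ → G}
    (hB : Continuous B) (hc : Continuous c) (y0 : G) (y : C(Set.Icc 0 T, G)) :
    C(Set.Icc 0 T, G) where
  toFun t := y0 + ∫ s in (0 : ℝ)..t, picardRhs hT B c y s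
  continuous_toFun := by
    refine continuous_const.add ?_
    exact (intervalIntegral.continuous_primitive
      (fun a b => (continuous_picardRhs hT hB hc y).intervalIntegrable a b) 0).comp
        continuous_subtype_val

/-- The factorial bound which makes a high iterate of the Picard map a contraction, however long
the time interval is. -/
lemma dist_picardMap_iterate_le {T : ℝ} (hT : 0 ≤ T) {B : ℝ → G →L[ℝ] G} {c : ℝ → G}
    (hB : Continuous B) (hc : Continuous c) (y0 : G) {L : ℝ} (hL0 : 0 ≤ L)
    (hL : ∀ t ∈ Set.Icc (0 : ℝ) T, ‖B t‖ ≤ L) (y z : C(Set.Icc 0 T, G)) (n : ℕ)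
    (t : Set.Icc (0 : ℝ) T) :
    ‖(picardMap hT hB hc y0)^[n] y t - (picardMap hT hB hc y0)^[n] z t‖ ≤
      (L * t) ^ n / n ! * dist y z := by
  induction n generalizing t with
  | zero =>
    simpa [dist_eq_norm] using ContinuousMap.dist_apply_le_dist (f := y) (g := z) t
  | succ n ih =>
    rw [Function.iterate_succ_apply', Function.iterate_succ_apply']
    set Y := (picardMap hT hB hc y0)^[n] y
    set Z := (picardMap hT hB hc y0)^[n] z
    change ‖(y0 + ∫ s in (0 : ℝ)..t, picardRhs hT B c Y s) -
      (y0 + ∫ s in (0 : ℝ)..t, picardRhs hT B c Z s)‖ ≤ _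
    rw [add_sub_add_left_eq_sub, ← intervalIntegral.integral_sub
      ((continuous_picardRhs hT hB hc Y).intervalIntegrable _ _)
      ((continuous_picardRhs hT hB hc Z).intervalIntegrable _ _)]
    have hle : ∀ s ∈ Set.Ioc (0 : ℝ) t, ‖picardRhs hT B c Y s - picardRhs hT B c Z s‖ ≤
        (L ^ (n + 1) / n ! * dist y z) * s ^ n := by
      intro s hs
      have hs' : s ∈ Set.Icc (0 : ℝ) T := ⟨hs.1.le, hs.2.trans t.2.2⟩
      have h1 := ih ⟨s, hs'⟩
      have h2 : picardRhs hT B c Y s - picardRhs hT B c Z s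
          = B s (Y ⟨s, hs'⟩ - Z ⟨s, hs'⟩) := by
        simp only [picardRhs, Set.IccExtend_of_mem hT _ hs', map_sub]
        abel
      rw [h2]
      calc _ ≤ ‖B s‖ * ‖Y ⟨s, hs'⟩ - Z ⟨s, hs'⟩‖ := (B s).le_opNorm _
        _ ≤ L * ((L * s) ^ n / n ! * dist y z) :=
          mul_le_mul (hL s hs') h1 (norm_nonneg _) hL0
        _ = _ := by rw [mul_pow]; ring
    have hi := intervalIntegral.norm_integral_le_of_norm_le (μ := volume) t.2.1
      (Filter.Eventually.of_forall hle) (Continuous.intervalIntegrable (by fun_prop) _ _)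
    refine hi.trans (le_of_eq ?_)
    rw [intervalIntegral.integral_const_mul, integral_pow, Nat.factorial_succ]
    push_cast
    rw [mul_pow]
    field_simp
    simp

/-- Global existence on `[0,T]` for a linear ODE with norm-continuous bounded operator coefficients. -/
lemma exists_linear_ode [CompleteSpace G] {T : ℝ} (hT : 0 ≤ T) {B : ℝ → G →L[ℝ] G} {c : ℝ → G}
    (hB : Continuous B) (hc : Continuous c) (y0 : G) :
    ∃ y : ℝ → G, y 0 = y0 ∧
      ∀ t ∈ Set.Icc (0 : ℝ) T, HasDerivWithinAt y (B t (y t) + c t) (Set.Icc 0 T) t := by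
  obtain ⟨L, hL⟩ := (isCompact_Icc (a := (0 : ℝ)) (b := T)).exists_bound_of_continuousOn
    hB.continuousOn
  have hL0 : 0 ≤ L := (norm_nonneg _).trans (hL 0 ⟨le_rfl, hT⟩)
  obtain ⟨n, hn⟩ := FloorSemiring.tendsto_pow_div_factorial_atTop (L * T)
    |>.eventually (gt_mem_nhds zero_lt_one) |>.exists
  have hK : (0 : ℝ) ≤ (L * T) ^ n / n ! := by positivity
  have hcontr : ContractingWith ⟨_, hK⟩ (picardMap hT hB hc y0)^[n] := by
    refine ⟨hn, LipschitzWith.of_dist_le_mul fun y z => ?_⟩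
    rw [ContinuousMap.dist_le (by positivity)]
    intro t
    rw [dist_eq_norm]
    refine (dist_picardMap_iterate_le hT hB hc y0 hL0 hL y z n t).trans ?_
    have := t.2.1
    have := t.2.2
    change _ ≤ (L * T) ^ n / n ! * dist y z
    gcongr
  have : Nonempty C(Set.Icc 0 T, G) := ⟨0⟩
  have hfix := hcontr.isFixedPt_fixedPoint_iterate
  set y := ContractingWith.fixedPoint _ hcontr
  have hval : ∀ t : Set.Icc (0 : ℝ) T, y t = y0 + ∫ s in (0 : ℝ)..t, picardRhs hT B c y s :=
    fun t => (DFunLike.congr_fun hfix t).symm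
  refine ⟨fun t => y0 + ∫ s in (0 : ℝ)..t, picardRhs hT B c y s, by simp, fun t ht => ?_⟩
  have hd := ((continuous_picardRhs hT hB hc y).integral_hasStrictDerivAt 0 t).hasDerivAt
  have heq : picardRhs hT B c y t = B t (y0 + ∫ s in (0 : ℝ)..t, picardRhs hT B c y s) + c t := by
    rw [← hval ⟨t, ht⟩, picardRhs, Set.IccExtend_of_mem hT _ ht]
  rw [← heq]
  exact (hd.const_add y0).hasDerivWithinAt

/-- Uniqueness on `[0,T]` for a linear second-order ODE with norm-continuous bounded operator coefficients. -/
lemma unique_linear_second_order {T : ℝ} {A : ℝ → G →L[ℝ] G} {c : ℝ → G}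
    (hA : Continuous A) {u u1 v v1 : ℝ → G}
    (hu : ∀ t ∈ Set.Icc (0 : ℝ) T, HasDerivWithinAt u (u1 t) (Set.Icc 0 T) t)
    (hu1 : ∀ t ∈ Set.Icc (0 : ℝ) T, HasDerivWithinAt u1 (A t (u t) + c t) (Set.Icc 0 T) t)
    (hv : ∀ t ∈ Set.Icc (0 : ℝ) T, HasDerivWithinAt v (v1 t) (Set.Icc 0 T) t)
    (hv1 : ∀ t ∈ Set.Icc (0 : ℝ) T, HasDerivWithinAt v1 (A t (v t) + c t) (Set.Icc 0 T) t)
    (h0 : u 0 = v 0) (h1 : u1 0 = v1 0) : Set.EqOn u v (Set.Icc 0 T) := by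
  obtain ⟨L, hL⟩ := (isCompact_Icc (a := (0 : ℝ)) (b := T)).exists_bound_of_continuousOn
    hA.continuousOn
  let w : ℝ → G × G → G × G := fun t p => (p.2, A t p.1 + c t)
  have hw : ∀ t ∈ Set.Ico (0 : ℝ) T, LipschitzOnWith (max 1 L.toNNReal) (w t) Set.univ := by
    intro t ht
    refine LipschitzWith.lipschitzOnWith ?_
    refine LipschitzWith.prodMk LipschitzWith.prod_snd ?_
    refine LipschitzWith.of_dist_le_mul fun p q => ?_
    have hle := hL t ⟨ht.1, ht.2.le⟩
    have hl0 : 0 ≤ L := (norm_nonneg _).trans hle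
    rw [Real.coe_toNNReal _ hl0, dist_add_right, dist_eq_norm, ← map_sub]
    refine ((A t).le_opNorm _).trans ?_
    refine mul_le_mul hle ?_ (norm_nonneg _) hl0
    rw [← dist_eq_norm]
    exact le_max_left _ _
  have key : Set.EqOn (fun t => (u t, u1 t)) (fun t => (v t, v1 t)) (Set.Icc 0 T) := by
    have hmem : ∀ t ∈ Set.Ico (0 : ℝ) T, Set.Icc 0 T ∈ nhdsWithin t (Set.Ici t) := fun t ht =>
      Filter.mem_of_superset (Icc_mem_nhdsGE ht.2) (Set.Icc_subset_Icc_left ht.1)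
    refine ODE_solution_unique_of_mem_Icc_right (v := w) (s := fun _ => Set.univ) hw ?_ ?_
      (fun _ _ => trivial) ?_ ?_ (fun _ _ => trivial) (by simp [h0, h1])
    · exact fun t ht => ((hu t ht).prodMk (hu1 t ht)).continuousWithinAt
    · exact fun t ht => (((hu t ⟨ht.1, ht.2.le⟩).prodMk (hu1 t ⟨ht.1, ht.2.le⟩)).mono_of_mem_nhdsWithin
        (hmem t ht))
    · exact fun t ht => ((hv t ht).prodMk (hv1 t ht)).continuousWithinAt
    · exact fun t ht => (((hv t ⟨ht.1, ht.2.le⟩).prodMk (hv1 t ⟨ht.1, ht.2.le⟩)).mono_of_mem_nhdsWithin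
        (hmem t ht))
  exact fun t ht => congrArg Prod.fst (key ht)

/-- Global existence on `[0,T]` for a linear second-order ODE, by reduction to a first-order
system for `(u, u')`. -/
lemma exists_linear_second_order [CompleteSpace G] {T : ℝ} (hT : 0 ≤ T) {A : ℝ → G →L[ℝ] G}
    {c : ℝ → G} (hA : Continuous A) (hc : Continuous c) (a b : G) :
    ∃ u u1 : ℝ → G, u 0 = a ∧ u1 0 = b ∧
      (∀ t ∈ Set.Icc (0 : ℝ) T, HasDerivWithinAt u (u1 t) (Set.Icc 0 T) t) ∧
      ∀ t ∈ Set.Icc (0 : ℝ) T, HasDerivWithinAt u1 (A t (u t) + c t) (Set.Icc 0 T) t := by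
  have hB : Continuous fun t => (ContinuousLinearMap.inl ℝ G G).comp (ContinuousLinearMap.snd ℝ G G)
      + (ContinuousLinearMap.inr ℝ G G).comp ((A t).comp (ContinuousLinearMap.fst ℝ G G)) := by
    fun_prop
  obtain ⟨y, hy0, hy⟩ := exists_linear_ode hT hB
    (c := fun t => ((0 : G), c t)) (by fun_prop) (a, b)
  refine ⟨fun t => (y t).1, fun t => (y t).2, by simp [hy0], by simp [hy0], fun t ht => ?_,
    fun t ht => ?_⟩
  · simpa using! (hasFDerivAt_fst (𝕜 := ℝ) (p := y t)).comp_hasDerivWithinAt t (hy t ht)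
  · simpa using! (hasFDerivAt_snd (𝕜 := ℝ) (p := y t)).comp_hasDerivWithinAt t (hy t ht)

end ODE

/-! ### The weighted spaces as copies of `ℓ²` -/

section Space

variable {d : ℕ}

/-- The Hilbert space `ℓ²(ℤ^d)`. -/
abbrev L2 (d : ℕ) : Type := lp (fun _ : Fin d → ℤ => ℂ) 2

lemma jap_sq (m : Fin d → ℤ) : jap m ^ 2 = 1 + ∑ i, (m i : ℝ) ^ 2 :=
  Real.sq_sqrt (by positivity)

lemma jap_pos (m : Fin d → ℤ) : 0 < jap m :=
  Real.sqrt_pos.2 (by positivity)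

lemma jap_pow_ne (k : ℕ) (m : Fin d → ℤ) : ((jap m ^ k : ℝ) : ℂ) ≠ 0 := by
  exact_mod_cast (pow_pos (jap_pos m) k).ne'

/-- The isometry `ℓ² → ℓ^{2,k}`, `U ↦ ⟨·⟩^{-k} U`, written on functions. -/
def unw (k : ℕ) (U : (Fin d → ℤ) → ℂ) (m : Fin d → ℤ) : ℂ :=
  ((jap m ^ k : ℝ) : ℂ)⁻¹ * U m

lemma unw_injective (k : ℕ) : Function.Injective (unw (d := d) k) := by
  intro U V h
  funext m
  exact mul_left_cancel₀ (inv_ne_zero (jap_pow_ne k m)) (congrFun h m)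

lemma lpn_two (u : (Fin d → ℤ) → ℂ) : lpn 2 u = (∑' m, ‖u m‖ₑ ^ 2) ^ (1 / 2 : ℝ) := by
  simp [lpn, enorm_eq_nnnorm]

lemma w2_unw (k : ℕ) (U : (Fin d → ℤ) → ℂ) :
    w2 k (unw k U) = (∑' m, ‖U m‖ₑ ^ 2) ^ (1 / 2 : ℝ) := by
  rw [w2, lpn_two]
  congr 2
  funext m
  rw [unw, mul_inv_cancel_left₀ (jap_pow_ne k m)]

lemma memℓp_two_iff (U : (Fin d → ℤ) → ℂ) :
    Memℓp U 2 ↔ ∑' m, ‖U m‖ₑ ^ 2 ≠ ⊤ := by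
  rw [memℓp_gen_iff (by simp)]
  have h : ∀ m, ‖U m‖ₑ ^ 2 = ‖(‖U m‖ ^ (2 : ℝ≥0∞).toReal : ℝ)‖ₑ := fun m => by
    simp [enorm_pow]
  simp_rw [h, tsum_enorm_ne_top_iff_summable_norm]
  simp

lemma enorm_sq_eq (U : L2 d) : ‖U‖ₑ ^ 2 = ∑' m, ‖U m‖ₑ ^ 2 := by
  have h := lp.norm_rpow_eq_tsum (p := 2) (by simp) U
  have hs := (lp.memℓp U).summable (p := 2) (by simp)
  simp only [ENNReal.toReal_ofNat, Real.rpow_ofNat] at h hs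
  rw [← ofReal_norm, ← ENNReal.ofReal_pow (norm_nonneg _), h,
    ENNReal.ofReal_tsum_of_nonneg (fun _ => by positivity) hs]
  congr 1
  funext m
  rw [ENNReal.ofReal_pow (norm_nonneg _), ofReal_norm]

lemma w2_unw_coe (k : ℕ) (U : L2 d) : w2 k (unw k U) = ‖U‖ₑ := by
  rw [w2_unw, ← enorm_sq_eq, ← ENNReal.rpow_natCast, ← ENNReal.rpow_mul]
  simp

lemma exists_unw {k : ℕ} {u : (Fin d → ℤ) → ℂ} (hu : w2 k u < ⊤) :
    ∃ U : L2 d, u = unw k U := by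
  have hu' : u = unw k (fun m => ((jap m ^ k : ℝ) : ℂ) * u m) := by
    funext m
    rw [unw, inv_mul_cancel_left₀ (jap_pow_ne k m)]
  have hm : Memℓp (fun m => ((jap m ^ k : ℝ) : ℂ) * u m) 2 := by
    rw [memℓp_two_iff]
    rw [hu', w2_unw] at hu
    intro h
    rw [h] at hu
    simp at hu
  exact ⟨⟨_, hm⟩, hu'⟩

lemma unw_sub (k : ℕ) (U V : L2 d) :
    (fun m => unw k U m - unw k V m) = unw k (U - V : L2 d) := by
  funext m
  simp [unw, mul_sub]

lemma tendsto_unw_iff {α : Type*} {l : Filter α} {k : ℕ} {U : α → L2 d} {V : L2 d}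
    {w : α → (Fin d → ℤ) → ℂ} (hw : ∀ s, w s = unw k (U s - V : L2 d)) :
    Tendsto (fun s => w2 k (w s)) l (nhds 0) ↔ Tendsto U l (nhds V) := by
  simp_rw [hw, w2_unw_coe]
  rw [tendsto_iff_edist_tendsto_0]
  simp_rw [edist_eq_enorm_sub]

lemma contW_unw_iff {k : ℕ} {S : Set ℝ} {U : ℝ → L2 d} :
    ContW k S (fun t => unw k (U t)) ↔ ContinuousOn U S :=
  forall₂_congr fun t _ => tendsto_unw_iff fun s => unw_sub k (U s) (U t)

lemma derivW_unw_iff {k : ℕ} {S : Set ℝ} {U U' : ℝ → L2 d} :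
    DerivW k S (fun t => unw k (U t)) (fun t => unw k (U' t)) ↔
      ∀ t ∈ S, HasDerivWithinAt U (U' t) S t := by
  refine forall₂_congr fun t _ => ?_
  rw [hasDerivWithinAt_iff_tendsto_slope]
  refine tendsto_unw_iff fun s => ?_
  funext m
  change (s - t)⁻¹ • (unw k (U s) m - unw k (U t) m) - unw k (U' t) m =
    ((jap m ^ k : ℝ) : ℂ)⁻¹ * ((s - t)⁻¹ • (U s m - U t m) - U' t m)
  simp only [unw, Complex.real_smul]
  ring

/-- A curve with values in `ℓ^{2,k}` at the times in `S` lifts to `ℓ²`; its values at other times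
play no role. -/
lemma exists_unw_curve {k : ℕ} {S : Set ℝ} {u : ℝ → (Fin d → ℤ) → ℂ}
    (hu : ∀ t ∈ S, w2 k (u t) < ⊤) : ∃ U : ℝ → L2 d, ∀ t ∈ S, u t = unw k (U t) := by
  classical
  choose! U hU using fun t (ht : t ∈ S) => exists_unw (hu t ht)
  exact ⟨U, hU⟩

lemma ContW.congr {k : ℕ} {S : Set ℝ} {u v : ℝ → (Fin d → ℤ) → ℂ} (hu : ContW k S u)
    (h : ∀ t ∈ S, u t = v t) : ContW k S v := by
  intro t ht
  refine (hu t ht).congr' ?_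
  filter_upwards [self_mem_nhdsWithin] with s hs
  rw [h s hs, h t ht]

lemma DerivW.congr {k : ℕ} {S : Set ℝ} {u u' v v' : ℝ → (Fin d → ℤ) → ℂ} (hu : DerivW k S u u')
    (h : ∀ t ∈ S, u t = v t) (h' : ∀ t ∈ S, u' t = v' t) : DerivW k S v v' := by
  intro t ht
  refine (hu t ht).congr' ?_
  filter_upwards [self_mem_nhdsWithin] with s hs
  rw [h s hs.1, h t ht, h' t ht]

end Space

/-! ### Boundedness of the discrete derivatives and of multiplication operators -/

section Operators

variable {d : ℕ}

/-- `φⱼ` along the `j`-th axis. -/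
def phi1 (a : ℤ) : ℂ := (-4 * Complex.I) / ((Real.pi : ℂ) * (4 * (a : ℂ) ^ 2 - 1))

lemma phi_single (j : Fin d) (a : ℤ) : phi d j (Pi.single j a) = phi1 a := by
  have h : ∀ i, i ≠ j → (Pi.single j a : Fin d → ℤ) i = 0 := fun i hi => by
    simp [hi]
  rw [phi, if_pos h]
  simp [phi1]

lemma pd_eq (j : Fin d) (u : (Fin d → ℤ) → ℂ) (x : Fin d → ℤ) :
    pd j u x = ∑' a : ℤ, u (x - Pi.single j a) * phi1 a := by
  have hinj : Function.Injective fun a : ℤ => x - Pi.single j a := fun a b h =>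
    Pi.single_injective j (sub_right_injective h)
  rw [pd, dconv, ← hinj.tsum_eq]
  · simp [phi_single]
  · intro m hm
    by_cases h : ∀ i, i ≠ j → (x - m) i = 0
    · refine ⟨(x - m) j, ?_⟩
      have : Pi.single j ((x - m) j) = x - m := by
        funext i
        by_cases hi : i = j
        · subst hi; simp
        · rw [Pi.single_eq_of_ne hi, h i hi]
      simp only [this, sub_sub_cancel]
    · refine absurd ?_ hm
      simp only [phi, if_neg h, mul_zero, ne_eq]

lemma norm_phi1_le (a : ℤ) : ‖phi1 a‖ ≤ 2 / (1 + (a : ℝ) ^ 2) := by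
  have hz : (1 : ℝ) + (a : ℝ) ^ 2 ≤ |4 * (a : ℝ) ^ 2 - 1| := by
    rcases eq_or_ne a 0 with rfl | ha
    · simp
    · have h1 : (1 : ℝ) ≤ (a : ℝ) ^ 2 := by
        have : 1 ≤ a ^ 2 := by have := sq_pos_of_ne_zero ha; lia
        exact_mod_cast this
      rw [abs_of_nonneg (by linarith)]
      linarith
  have hn : ‖phi1 a‖ = 4 / (Real.pi * |4 * (a : ℝ) ^ 2 - 1|) := by
    have : (4 * (a : ℂ) ^ 2 - 1) = ((4 * (a : ℝ) ^ 2 - 1 : ℝ) : ℂ) := by push_cast; ring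
    rw [phi1, this, norm_div, norm_mul, norm_mul, Complex.norm_real, Complex.norm_real]
    simp [abs_of_pos Real.pi_pos]
  rw [hn, div_le_div_iff₀ (mul_pos Real.pi_pos (lt_of_lt_of_le (by positivity) hz))
    (by positivity)]
  nlinarith [Real.pi_gt_three, sq_nonneg (a : ℝ)]

/-- The square of the conjugated kernel `⟨x⟩^k φⱼ(a eⱼ) ⟨x - a eⱼ⟩^{-k}` splits as a product of a
factor summable in `a` uniformly in `x`, and a factor depending summably on `a` alone. For `k = 1`
this is where `⟨x⟩² ≤ 2⟨x - a eⱼ⟩² + 2a²` enters. -/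
lemma kernel_sq_le {k : ℕ} (hk : k = 0 ∨ k = 1) (j : Fin d) (x : Fin d → ℤ) (a : ℤ) :
    (jap x ^ k * ‖phi1 a‖ * (jap (x - Pi.single j a) ^ k)⁻¹) ^ 2 ≤
      (8 * ((1 + (a : ℝ) ^ 2)⁻¹ + (1 + ((x j - a : ℤ) : ℝ) ^ 2)⁻¹)) * (1 + (a : ℝ) ^ 2)⁻¹ := by
  set y := x - Pi.single j a with hy
  have hyp := jap_pos y
  have hphi : ‖phi1 a‖ ^ 2 ≤ 4 * ((1 + (a : ℝ) ^ 2)⁻¹) ^ 2 := by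
    have := pow_le_pow_left₀ (norm_nonneg _) (norm_phi1_le a) 2
    rw [div_pow] at this
    rw [inv_pow]
    linarith [show (2 : ℝ) ^ 2 / (1 + (a : ℝ) ^ 2) ^ 2 = 4 * ((1 + (a : ℝ) ^ 2) ^ 2)⁻¹ by ring]
  have hxy : jap x ^ 2 ≤ 2 * jap y ^ 2 + 2 * (a : ℝ) ^ 2 := by
    rw [jap_sq, jap_sq]
    have : ∑ i, (x i : ℝ) ^ 2 ≤ ∑ i, (2 * (y i : ℝ) ^ 2 + if i = j then 2 * (a : ℝ) ^ 2 else 0) := by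
      refine Finset.sum_le_sum fun i _ => ?_
      by_cases hi : i = j
      · subst hi
        have : (y i : ℝ) = x i - a := by simp [hy]
        rw [if_pos rfl, this]
        nlinarith [sq_nonneg ((x i : ℝ) - 2 * a)]
      · have : y i = x i := by simp [hy, Pi.single_eq_of_ne hi]
        rw [if_neg hi, this]
        nlinarith [sq_nonneg (x i : ℝ)]
    rw [Finset.sum_add_distrib, ← Finset.mul_sum, Finset.sum_ite_eq' Finset.univ j] at this
    simp only [Finset.mem_univ, if_true] at this
    linarith
  have hyj : 1 + ((x j - a : ℤ) : ℝ) ^ 2 ≤ jap y ^ 2 := by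
    rw [jap_sq]
    have : (y j : ℝ) ^ 2 ≤ ∑ i, (y i : ℝ) ^ 2 :=
      Finset.single_le_sum (f := fun i => (y i : ℝ) ^ 2) (fun i _ => sq_nonneg _)
        (Finset.mem_univ j)
    have hyj' : y j = x j - a := by simp [hy]
    rw [hyj'] at this
    linarith
  have hratio : (jap x ^ k * (jap y ^ k)⁻¹) ^ 2 ≤
      2 + 2 * (a : ℝ) ^ 2 * (1 + ((x j - a : ℤ) : ℝ) ^ 2)⁻¹ := by
    rcases hk with rfl | rfl
    · simp only [pow_zero, inv_one, mul_one, one_pow]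
      have : 0 ≤ 2 * (a : ℝ) ^ 2 * (1 + ((x j - a : ℤ) : ℝ) ^ 2)⁻¹ := by positivity
      linarith
    · simp only [pow_one, mul_pow, inv_pow]
      calc jap x ^ 2 * (jap y ^ 2)⁻¹ ≤ (2 * jap y ^ 2 + 2 * (a : ℝ) ^ 2) * (jap y ^ 2)⁻¹ := by
            gcongr
        _ = 2 + 2 * (a : ℝ) ^ 2 * (jap y ^ 2)⁻¹ := by field_simp
        _ ≤ _ := by gcongr
  have hA : (a : ℝ) ^ 2 * (1 + (a : ℝ) ^ 2)⁻¹ ≤ 1 := by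
    rw [← div_eq_mul_inv, div_le_one (by positivity)]
    linarith
  set q := (1 + (a : ℝ) ^ 2)⁻¹ with hq
  set r := (1 + ((x j - a : ℤ) : ℝ) ^ 2)⁻¹ with hr
  have hq0 : 0 ≤ q := by positivity
  have hr0 : 0 ≤ r := by positivity
  calc _ = (jap x ^ k * (jap y ^ k)⁻¹) ^ 2 * ‖phi1 a‖ ^ 2 := by ring
    _ ≤ (2 + 2 * (a : ℝ) ^ 2 * r) * (4 * q ^ 2) := by gcongr
    _ = 8 * q ^ 2 + 8 * (((a : ℝ) ^ 2 * q) * (r * q)) := by ring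
    _ ≤ 8 * q ^ 2 + 8 * (1 * (r * q)) := by gcongr
    _ = _ := by ring

/-- Cauchy–Schwarz for series in `[0,∞]`. -/
lemma tsum_mul_sq_le {ι : Type*} [Countable ι] (f g : ι → ℝ≥0∞) :
    (∑' i, f i * g i) ^ 2 ≤ (∑' i, f i ^ 2) * ∑' i, g i ^ 2 := by
  let _ : MeasurableSpace ι := ⊤
  have h := ENNReal.lintegral_mul_le_Lp_mul_Lq (Measure.count (α := ι)) Real.HolderConjugate.two_two
    (f := f) (g := g) (by fun_prop) (by fun_prop)
  simp only [lintegral_count, Pi.mul_apply, ENNReal.rpow_ofNat] at h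
  calc _ ≤ ((∑' i, f i ^ 2) ^ (1 / 2 : ℝ) * (∑' i, g i ^ 2) ^ (1 / 2 : ℝ)) ^ 2 := by gcongr
    _ = _ := by
      rw [mul_pow, ← ENNReal.rpow_natCast, ← ENNReal.rpow_natCast, ← ENNReal.rpow_mul,
        ← ENNReal.rpow_mul]
      simp

/-- The value of `∑ₐ 1/(1+a²)` in `[0,∞]`. -/
def invSqSum : ℝ≥0∞ := ∑' a : ℤ, ENNReal.ofReal ((1 + (a : ℝ) ^ 2)⁻¹)

lemma invSqSum_ne_top : invSqSum ≠ ⊤ := by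
  have h : Summable fun a : ℤ => (1 + (a : ℝ) ^ 2)⁻¹ := by
    have h2 := (Real.summable_one_div_int_pow (p := 2)).2 one_lt_two
    refine Summable.of_norm_bounded_eventually h2 ?_
    filter_upwards [(Set.finite_singleton (0 : ℤ)).compl_mem_cofinite] with a ha
    have ha' : (a : ℝ) ≠ 0 := by simpa using ha
    rw [Real.norm_of_nonneg (by positivity), one_div]
    gcongr
    linarith
  rw [invSqSum, ← ENNReal.ofReal_tsum_of_nonneg (fun _ => by positivity) h]
  exact ENNReal.ofReal_ne_top

/-- The Schur-type estimate behind the boundedness of `∂ⱼ` on `ℓ^{2,k}`, `k ∈ {0,1}`. -/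
lemma schur_bound {k : ℕ} (hk : k = 0 ∨ k = 1) (j : Fin d) (U : (Fin d → ℤ) → ℂ) :
    ∑' x : Fin d → ℤ, (∑' a : ℤ, ‖((jap x ^ k : ℝ) : ℂ) *
      (unw k U (x - Pi.single j a) * phi1 a)‖ₑ) ^ 2 ≤
      16 * invSqSum ^ 2 * ∑' x, ‖U x‖ₑ ^ 2 := by
  let p : (Fin d → ℤ) → ℤ → ℝ := fun x a =>
    8 * ((1 + (a : ℝ) ^ 2)⁻¹ + (1 + ((x j - a : ℤ) : ℝ) ^ 2)⁻¹)
  let q : ℤ → ℝ := fun a => (1 + (a : ℝ) ^ 2)⁻¹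
  have hp0 : ∀ x a, 0 ≤ p x a := fun x a => by positivity
  have hq0 : ∀ a, 0 ≤ q a := fun a => by positivity
  have hterm : ∀ x a, ‖((jap x ^ k : ℝ) : ℂ) * (unw k U (x - Pi.single j a) * phi1 a)‖ₑ ≤
      ENNReal.ofReal (√(p x a)) * (ENNReal.ofReal (√(q a)) * ‖U (x - Pi.single j a)‖ₑ) := by
    intro x a
    have h1 : ‖((jap x ^ k : ℝ) : ℂ) * (unw k U (x - Pi.single j a) * phi1 a)‖ ≤
        √(p x a) * (√(q a) * ‖U (x - Pi.single j a)‖) := by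
      have hx := (pow_pos (jap_pos x) k).le
      have hy := (pow_pos (jap_pos (x - Pi.single j a)) k).le
      rw [unw, norm_mul, norm_mul, norm_mul, norm_inv, Complex.norm_real, Complex.norm_real,
        Real.norm_of_nonneg hx, Real.norm_of_nonneg hy, ← mul_assoc √(p x a), ← Real.sqrt_mul (hp0 x a)]
      calc _ = (jap x ^ k * ‖phi1 a‖ * (jap (x - Pi.single j a) ^ k)⁻¹) *
            ‖U (x - Pi.single j a)‖ := by ring
        _ ≤ _ := by
          gcongr
          exact Real.le_sqrt_of_sq_le (kernel_sq_le hk j x a)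
    rw [← ofReal_norm, ← ofReal_norm, ← ENNReal.ofReal_mul (Real.sqrt_nonneg _),
      ← ENNReal.ofReal_mul (Real.sqrt_nonneg _)]
    exact ENNReal.ofReal_le_ofReal h1
  have hsq : ∀ r : ℝ, 0 ≤ r → ENNReal.ofReal (√r) ^ 2 = ENNReal.ofReal r := fun r hr => by
    rw [← ENNReal.ofReal_pow (Real.sqrt_nonneg _), Real.sq_sqrt hr]
  have hpsum : ∀ x, ∑' a, ENNReal.ofReal (p x a) = 16 * invSqSum := by
    intro x
    have : ∀ a, ENNReal.ofReal (p x a) =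
        8 * (ENNReal.ofReal (q a) + ENNReal.ofReal (q (Equiv.subLeft (x j) a))) := fun a => by
      rw [ENNReal.ofReal_mul (by norm_num), ENNReal.ofReal_add (hq0 _) (by positivity)]
      simp [q]
    simp_rw [this]
    rw [ENNReal.tsum_mul_left, ENNReal.tsum_add,
      (Equiv.subLeft (x j)).tsum_eq (fun a => ENNReal.ofReal (q a))]
    change 8 * (invSqSum + invSqSum) = _
    ring
  calc _ ≤ ∑' x : Fin d → ℤ, 16 * invSqSum *
        ∑' a : ℤ, ENNReal.ofReal (q a) * ‖U (x - Pi.single j a)‖ₑ ^ 2 := by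
        refine ENNReal.tsum_le_tsum fun x => ?_
        refine (pow_le_pow_left₀ zero_le (ENNReal.tsum_le_tsum (hterm x)) 2).trans ?_
        refine (tsum_mul_sq_le _ _).trans (le_of_eq ?_)
        simp_rw [mul_pow, hsq _ (hp0 x _), hsq _ (hq0 _)]
        rw [hpsum]
    _ = 16 * invSqSum * ∑' a : ℤ, ENNReal.ofReal (q a) * ∑' x, ‖U x‖ₑ ^ 2 := by
        rw [ENNReal.tsum_mul_left, ENNReal.tsum_comm]
        congr 2
        funext a
        rw [ENNReal.tsum_mul_left]
        congr 1
        exact (Equiv.subRight (Pi.single j a : Fin d → ℤ)).tsum_eq (fun x => ‖U x‖ₑ ^ 2)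
    _ = _ := by
        rw [ENNReal.tsum_mul_right]
        change 16 * invSqSum * (invSqSum * _) = _
        ring

/-- A linear rule on `ℓ²` with a square-sum bound is a bounded operator. -/
lemma exists_clm (R : L2 d → (Fin d → ℤ) → ℂ) (C : ℝ) (hC : 0 ≤ C)
    (hadd : ∀ U V x, R (U + V) x = R U x + R V x)
    (hsmul : ∀ (r : ℝ) U x, R (r • U) x = r • R U x)
    (hR : ∀ U, ∑' x, ‖R U x‖ₑ ^ 2 ≤ ENNReal.ofReal C ^ 2 * ∑' x, ‖U x‖ₑ ^ 2) :
    ∃ D : L2 d →L[ℝ] L2 d, (∀ U x, D U x = R U x) ∧ ‖D‖ ≤ C := by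
  have hmem : ∀ U, Memℓp (R U) 2 := fun U => by
    rw [memℓp_two_iff]
    refine ne_top_of_le_ne_top ?_ (hR U)
    rw [← enorm_sq_eq]
    exact ENNReal.mul_ne_top (by simp) (by simp)
  let D0 : L2 d →ₗ[ℝ] L2 d :=
    { toFun := fun U => ⟨R U, hmem U⟩
      map_add' := fun U V => by
        ext x
        exact hadd U V x
      map_smul' := fun r U => by
        ext x
        exact hsmul r U x }
  have hb : ∀ U, ‖D0 U‖ ≤ C * ‖U‖ := fun U => by
    have h1 : ‖D0 U‖ₑ ^ 2 ≤ ENNReal.ofReal C ^ 2 * ‖U‖ₑ ^ 2 := by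
      rw [enorm_sq_eq, enorm_sq_eq]
      exact hR U
    rw [← ofReal_norm, ← ofReal_norm, ← mul_pow, ← ENNReal.ofReal_mul hC,
      ← ENNReal.ofReal_pow (by positivity), ← ENNReal.ofReal_pow (by positivity),
      ENNReal.ofReal_le_ofReal_iff (by positivity)] at h1
    exact le_of_sq_le_sq h1 (by positivity)
  exact ⟨D0.mkContinuous C hb, fun U x => rfl, D0.mkContinuous_norm_le hC hb⟩

/-- `∂ⱼ` is bounded on `ℓ^{2,k}`, `k ∈ {0,1}`, phrased on `ℓ²` through the isometry `unw k`. -/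
lemma exists_pd_clm {k : ℕ} (hk : k = 0 ∨ k = 1) (j : Fin d) :
    ∃ D : L2 d →L[ℝ] L2 d, ∀ U : L2 d, unw k (D U) = pd j (unw k U) := by
  have hsum : ∀ (U : L2 d) (x : Fin d → ℤ),
      Summable fun a : ℤ => unw k U (x - Pi.single j a) * phi1 a := by
    intro U x
    have hfin : ∑' x : Fin d → ℤ, (∑' a : ℤ, ‖((jap x ^ k : ℝ) : ℂ) *
      (unw k U (x - Pi.single j a) * phi1 a)‖ₑ) ^ 2 ≠ ⊤ := by
      refine ne_top_of_le_ne_top ?_ (schur_bound hk j U)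
      rw [← enorm_sq_eq]
      exact ENNReal.mul_ne_top (ENNReal.mul_ne_top (by simp) (by simp [invSqSum_ne_top])) (by simp)
    have hx := ENNReal.ne_top_of_tsum_ne_top hfin x
    have hx' : ∑' a : ℤ, ‖((jap x ^ k : ℝ) : ℂ) *
      (unw k U (x - Pi.single j a) * phi1 a)‖ₑ ≠ ⊤ := by
      intro h
      rw [h] at hx
      simp at hx
    exact (summable_mul_left_iff (jap_pow_ne k x)).1
      (tsum_enorm_ne_top_iff_summable_norm.1 hx').of_norm
  obtain ⟨D, hD, -⟩ := exists_clm (d := d)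
    (fun U x => ((jap x ^ k : ℝ) : ℂ) * pd j (unw k U) x) (4 * invSqSum.toReal) (by positivity)
    (fun U V x => by
      simp only [pd_eq]
      rw [← mul_add, ← (hsum U x).tsum_add (hsum V x)]
      congr 2
      funext a
      simp [unw]
      ring)
    (fun r U x => by
      simp only [pd_eq]
      rw [Complex.real_smul, mul_left_comm, ← tsum_mul_left (a := (r : ℂ))]
      congr 2
      funext a
      simp [unw]
      ring)
    (fun U => by
      have hc : ENNReal.ofReal (4 * invSqSum.toReal) ^ 2 = 16 * invSqSum ^ 2 := by
        rw [ENNReal.ofReal_mul (by norm_num), ENNReal.ofReal_toReal invSqSum_ne_top, mul_pow]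
        norm_num
      rw [hc]
      refine le_trans (ENNReal.tsum_le_tsum fun x => ?_) (schur_bound hk j U)
      rw [pd_eq, ← tsum_mul_left]
      gcongr
      exact enorm_tsum_le_tsum_enorm)
  refine ⟨D, fun U => ?_⟩
  funext x
  rw [unw, hD, inv_mul_cancel_left₀ (jap_pow_ne k x)]

/-- Multiplication by a bounded function is bounded on `ℓ²` by its supremum. -/
lemma exists_mul_clm (g : (Fin d → ℤ) → ℝ) (M : ℝ) (hg : ∀ m, |g m| ≤ M) :
    ∃ D : L2 d →L[ℝ] L2 d, (∀ U x, D U x = (g x : ℂ) * U x) ∧ ‖D‖ ≤ M := by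
  have hM : 0 ≤ M := (abs_nonneg _).trans (hg 0)
  refine exists_clm (fun U x => (g x : ℂ) * U x) M hM (fun U V x => by simp [mul_add])
    (fun r U x => by simp; ring) fun U => ?_
  rw [← ENNReal.tsum_mul_left]
  refine ENNReal.tsum_le_tsum fun x => ?_
  rw [← mul_pow, enorm_mul]
  gcongr
  rw [← ofReal_norm, Complex.norm_real]
  exact ENNReal.ofReal_le_ofReal (hg x)

lemma enorm_mul_clm_sub_le {g g' : (Fin d → ℤ) → ℝ} {D D' : L2 d →L[ℝ] L2 d}
    (hD : ∀ U x, D U x = (g x : ℂ) * U x) (hD' : ∀ U x, D' U x = (g' x : ℂ) * U x) :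
    ‖D - D'‖ₑ ≤ linf (fun m => g m - g' m) := by
  by_cases htop : linf (fun m => g m - g' m) = ⊤
  · simp [htop]
  have hb : ∀ m, |g m - g' m| ≤ (linf (fun m => g m - g' m)).toReal := fun m => by
    have h : ‖g m - g' m‖ₑ ≤ linf (fun m => g m - g' m) :=
      le_iSup (fun m => (‖g m - g' m‖₊ : ℝ≥0∞)) m
    rw [← ENNReal.ofReal_le_iff_le_toReal htop, ← Real.norm_eq_abs, ofReal_norm]
    exact h
  obtain ⟨E, hE, hEn⟩ := exists_mul_clm _ _ hb
  have hEq : D - D' = E := by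
    ext U x
    change D U x - D' U x = E U x
    rw [hD, hD', hE]
    push_cast
    ring
  rw [hEq, ← ofReal_norm]
  exact ENNReal.ofReal_le_of_le_toReal hEn

end Operators

/-! ### The source term and the wave equation -/

/-- Continuity and integrability place every `F(t)` in `ℓ^{2,k}`: by continuity the set of times
with `F(t) ∈ ℓ^{2,k}` is open and closed in `[0,T]`, and it is nonempty as the integral is
finite. No measurability of `t ↦ ‖F(t)‖` is needed. -/
lemma w2_lt_top_of_contW {d k : ℕ} {T : ℝ} (hT : 0 < T) {F : ℝ → (Fin d → ℤ) → ℂ}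
    (hFL : (∫⁻ s in Set.Icc (0 : ℝ) T, w2 k (F s)) < ⊤) (hFC : ContW k (Set.Icc 0 T) F) :
    ∀ t ∈ Set.Icc (0 : ℝ) T, w2 k (F t) < ⊤ := by
  have hadd : ∀ a b : (Fin d → ℤ) → ℂ, w2 k (fun m => a m - b m) < ⊤ →
      (w2 k a < ⊤ ↔ w2 k b < ⊤) := by
    intro a b hab
    obtain ⟨W, hW⟩ := exists_unw hab
    constructor
    · intro ha
      obtain ⟨A, hA⟩ := exists_unw ha
      have : b = unw k (A - W : L2 d) := by
        rw [← unw_sub, ← hA, ← hW]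
        funext m
        ring
      rw [this, w2_unw_coe]
      exact enorm_lt_top
    · intro hb
      obtain ⟨B, hB⟩ := exists_unw hb
      have : a = unw k (W - (-B) : L2 d) := by
        rw [← unw_sub, ← hW]
        funext m
        have : unw k (-B : L2 d) m = - b m := by
          rw [hB]
          simp [unw]
        rw [this]
        ring
      rw [this, w2_unw_coe]
      exact enorm_lt_top
  obtain ⟨s, hs, hsF⟩ : ∃ s ∈ Set.Icc (0 : ℝ) T, w2 k (F s) < ⊤ := by
    by_contra! hcon
    have : (∫⁻ s in Set.Icc (0 : ℝ) T, w2 k (F s)) = ∫⁻ _ in Set.Icc (0 : ℝ) T, (⊤ : ℝ≥0∞) :=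
      setLIntegral_congr_fun measurableSet_Icc fun s hs => top_le_iff.1 (hcon s hs)
    rw [this, setLIntegral_const, Real.volume_Icc, ENNReal.top_mul (by simpa using hT)] at hFL
    exact lt_irrefl _ hFL
  intro t ht
  refine (isPreconnected_Icc (a := (0 : ℝ)) (b := T)).induction₂'
    (fun x y => w2 k (F x) < ⊤ → w2 k (F y) < ⊤) ?_ ?_ hs ht hsF
  · intro x hx
    filter_upwards [(hFC x hx).eventually (gt_mem_nhds ENNReal.zero_lt_top)] with y hy
    exact ⟨(hadd _ _ hy).2, (hadd _ _ hy).1⟩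
  · exact fun x y z _ _ _ hxy hyz hx => hyz (hxy hx)

/-- global well-posedness of the generalized linear discrete wave
equation `∂ₜ²u - Σ_{j,l} g^{jl}∂ⱼ∂ₗu = F` with data `f, g ∈ ℓ^{2,k}`, `k ∈ {0,1}`:
existence and uniqueness of a classical solution `u ∈ C²([0,T];ℓ^{2,k}(ℤ^d))`. -/
theorem stmt11 (d : ℕ) (hd : 0 < d) (k : ℕ) (hk : k = 0 ∨ k = 1) (T : ℝ) (hT : 0 < T)
    (g : Fin d → Fin d → ℝ → (Fin d → ℤ) → ℝ)
    (hgB : ∀ j l, ∃ M : ℝ, ∀ t ∈ Set.Icc (0 : ℝ) T, ∀ m, |g j l t m| ≤ M)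
    (hgC : ∀ j l, ∀ t ∈ Set.Icc (0 : ℝ) T,
      Tendsto (fun s => linf (fun m => g j l s m - g j l t m))
        (nhdsWithin t (Set.Icc 0 T)) (nhds (0 : ℝ≥0∞)))
    (F : ℝ → (Fin d → ℤ) → ℂ)
    (hFL : (∫⁻ s in Set.Icc (0 : ℝ) T, w2 k (F s)) < ⊤)
    (hFC : ∀ t ∈ Set.Icc (0 : ℝ) T,
      Tendsto (fun s => w2 k (fun m => F s m - F t m))
        (nhdsWithin t (Set.Icc 0 T)) (nhds (0 : ℝ≥0∞)))
    (f h : (Fin d → ℤ) → ℂ) (hf : w2 k f < ⊤) (hh : w2 k h < ⊤) :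
    ∃ u u1 u2 : ℝ → (Fin d → ℤ) → ℂ,
      (IsC2 k (Set.Icc 0 T) u u1 u2 ∧
        (∀ t ∈ Set.Icc (0 : ℝ) T, ∀ x,
          u2 t x - ∑ j, ∑ l, (g j l t x : ℂ) * pd j (pd l (u t)) x = F t x) ∧
        (∀ x, u 0 x = f x) ∧ (∀ x, u1 0 x = h x)) ∧
      ∀ v v1 v2 : ℝ → (Fin d → ℤ) → ℂ,
        (IsC2 k (Set.Icc 0 T) v v1 v2 ∧
          (∀ t ∈ Set.Icc (0 : ℝ) T, ∀ x,
            v2 t x - ∑ j, ∑ l, (g j l t x : ℂ) * pd j (pd l (v t)) x = F t x) ∧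
          (∀ x, v 0 x = f x) ∧ (∀ x, v1 0 x = h x)) →
        ∀ t ∈ Set.Icc (0 : ℝ) T, ∀ x, v t x = u t x := by
  set S := Set.Icc (0 : ℝ) T with hS
  let pr : ℝ → ℝ := fun t => (Set.projIcc 0 T hT.le t : ℝ)
  have hprc : Continuous pr := continuous_subtype_val.comp continuous_projIcc
  have hprS : ∀ t, pr t ∈ S := fun t => (Set.projIcc 0 T hT.le t).2
  have hpr : ∀ t ∈ S, pr t = t := fun t ht => by simp [pr, Set.projIcc_of_mem hT.le ht]
  have h0S : (0 : ℝ) ∈ S := ⟨le_rfl, hT.le⟩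
  obtain ⟨f', rfl⟩ := exists_unw hf
  obtain ⟨h', rfl⟩ := exists_unw hh
  obtain ⟨F', hF'⟩ := exists_unw_curve (w2_lt_top_of_contW hT hFL hFC)
  have hF'c : ContinuousOn F' S := contW_unw_iff.1 (ContW.congr hFC hF')
  -- Below, `D j` is `∂ⱼ`, `E j l t` is multiplication by `g^{jl}(t)`, and `A t` and `c t` are the
  -- operator `∑ g^{jl} ∂ⱼ∂ₗ` and the source, extended to all real times by composition with `pr`.
  choose D hD using fun j : Fin d => exists_pd_clm hk j
  have hex : ∀ j l t, t ∈ S → ∃ E : L2 d →L[ℝ] L2 d, ∀ U x, E U x = (g j l t x : ℂ) * U x := by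
    intro j l t ht
    obtain ⟨M, hM⟩ := hgB j l
    obtain ⟨E, hE, -⟩ := exists_mul_clm (g j l t) M (hM t ht)
    exact ⟨E, hE⟩
  choose! E hE using hex
  have hEc : ∀ j l, ContinuousOn (E j l) S := by
    intro j l t ht
    rw [ContinuousWithinAt, tendsto_iff_edist_tendsto_0]
    refine tendsto_of_tendsto_of_tendsto_of_le_of_le' tendsto_const_nhds (hgC j l t ht)
      (Eventually.of_forall fun _ => zero_le) ?_
    filter_upwards [self_mem_nhdsWithin] with s hs
    rw [edist_eq_enorm_sub]
    exact enorm_mul_clm_sub_le (hE j l s hs) (hE j l t ht)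
  let A : ℝ → L2 d →L[ℝ] L2 d := fun t => ∑ j, ∑ l, (E j l (pr t)).comp ((D j).comp (D l))
  have hAc : Continuous A := by
    refine continuous_finsetSum _ fun j _ => continuous_finsetSum _ fun l _ => ?_
    exact ((hEc j l).comp_continuous hprc hprS).clm_comp continuous_const
  let c : ℝ → L2 d := fun t => F' (pr t)
  have hcc : Continuous c := hF'c.comp_continuous hprc hprS
  have hEq : ∀ t ∈ S, ∀ (U : L2 d) x,
      unw k (A t U + c t : L2 d) x =
        ∑ j, ∑ l, (g j l t x : ℂ) * pd j (pd l (unw k U)) x + F t x := by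
    intro t ht U x
    have hsum : (A t U + c t : L2 d) x = ∑ j, ∑ l, (g j l t x : ℂ) * D j (D l U) x + F' t x := by
      simp only [A, c, hpr t ht, sum_apply, lp.coeFn_add, Pi.add_apply,
        lp.coeFn_sum, Finset.sum_apply, ContinuousLinearMap.comp_apply, hE _ _ t ht]
    rw [unw, hsum, hF' t ht, mul_add, Finset.mul_sum]
    simp_rw [Finset.mul_sum, ← hD, unw]
    congr 1
    refine Finset.sum_congr rfl fun j _ => Finset.sum_congr rfl fun l _ => ?_
    ring
  obtain ⟨U, U1, hU0, hU10, hU, hU1⟩ := exists_linear_second_order hT.le hAc hcc f' h'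
  have hUc : ContinuousOn U S := fun t ht => (hU t ht).continuousWithinAt
  have hU1c : ContinuousOn U1 S := fun t ht => (hU1 t ht).continuousWithinAt
  have hU2c : ContinuousOn (fun t => A t (U t) + c t) S :=
    (hAc.continuousOn.clm_apply hUc).add hcc.continuousOn
  refine ⟨fun t => unw k (U t), fun t => unw k (U1 t),
    fun t => unw k (A t (U t) + c t : L2 d), ⟨⟨?_, ?_, ?_, ?_, ?_, ?_, ?_, ?_⟩, ?_, ?_, ?_⟩, ?_⟩
  · exact fun t _ => by simp only [w2_unw_coe, enorm_lt_top]
  · exact fun t _ => by simp only [w2_unw_coe, enorm_lt_top]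
  · exact fun t _ => by simp only [w2_unw_coe, enorm_lt_top]
  · exact contW_unw_iff.2 hUc
  · exact contW_unw_iff.2 hU1c
  · exact contW_unw_iff.2 hU2c
  · exact derivW_unw_iff.2 hU
  · exact derivW_unw_iff.2 hU1
  · intro t ht x
    simp only [hEq t ht]
    ring
  · simp [hU0]
  · simp [hU10]
  · rintro v v1 v2 ⟨hv, hveq, hv0, hv10⟩ t ht x
    obtain ⟨V, hV⟩ := exists_unw_curve hv.mem0
    obtain ⟨V1, hV1⟩ := exists_unw_curve hv.mem1
    have hV2 : ∀ t ∈ S, v2 t = unw k (A t (V t) + c t : L2 d) := by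
      intro t ht
      funext x
      rw [hEq t ht, ← hV t ht]
      linear_combination hveq t ht x
    have hd1 := derivW_unw_iff.1 (DerivW.congr hv.hder1 hV hV1)
    have hd2 := derivW_unw_iff.1 (DerivW.congr hv.hder2 hV1 hV2)
    have hcoe : ∀ {X Y : L2 d}, unw k X = unw k Y → X = Y := fun h => by
      ext m
      exact congrFun (unw_injective k h) m
    have hz : V 0 = U 0 := hcoe (by rw [← hV 0 h0S, hU0]; exact funext hv0)
    have hz1 : V1 0 = U1 0 := hcoe (by rw [← hV1 0 h0S, hU10]; exact funext hv10)
    rw [hV t ht, unique_linear_second_order hAc hd1 hd2 hU hU1 hz hz1 ht]
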